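/- arXiv:2009.00699 — 2 statements merged into one kernel-verified Lean document; each statement's English description precedes it below -/
import Mathlib

section
/- Let n and k be positive integers with i·n = 7k for some i ∈ {1,2,3} and 2k < n, and suppose that either n ≥ 42 or (n,k) ∈ {(28,8),(35,10),(35,15)}. Then for every outer vertex a_j of GP(n,k), there are exactly 20 vertices at graph distance exactly 4 from a_j; moreover the only coincidences among the 24 endpoints of the paths of length 4 from a_j through distinct neighbours are the four pairs given by the vertices a_{j-k-1}, a_{j+k-1}, a_{j-k+1} and a_{j+k+1}, each of which is reached by exactly two such paths. -/
open SimpleGraph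

/-- Vertices of the generalised Petersen graph: `Sum.inl j` is the outer vertex `a_j`,
`Sum.inr j` is the inner vertex `b_j`. -/
abbrev GPVertex (n : ℕ) := ZMod n ⊕ ZMod n

/-- The defining relation of the edges of `GP(n,k)`. -/
def GPRel (n k : ℕ) : GPVertex n → GPVertex n → Prop
  | Sum.inl i, Sum.inl j => j = i + 1
  | Sum.inl i, Sum.inr j => j = i
  | Sum.inr i, Sum.inr j => j = i + (k : ZMod n)
  | _, _ => False

/-- The generalised Petersen graph `GP(n,k)`. -/
def GP (n k : ℕ) : SimpleGraph (GPVertex n) := SimpleGraph.fromRel (GPRel n k)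

/-- The four outer vertices at distance `4` from `a_j` that are each reached via two
distinct neighbours of `a_j`. -/
def outerDoubled (n k : ℕ) (j : ZMod n) : Set (GPVertex n) :=
  {Sum.inl (j - (k : ZMod n) - 1), Sum.inl (j + (k : ZMod n) - 1),
   Sum.inl (j - (k : ZMod n) + 1), Sum.inl (j + (k : ZMod n) + 1)}

/-- Integer representatives of vertices: `(true, x, y)` is `a_{j+x+yk}`, `(false, x, y)` is
`b_{j+x+yk}`. -/
abbrev GPRep := Bool × ℤ × ℤ

/-- The vertex represented, relative to the base index `j`. -/
def phi (n k : ℕ) (j : ZMod n) : GPRep → GPVertex n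
  | (true, x, y) => Sum.inl (j + (x : ZMod n) + (y : ZMod n) * (k : ZMod n))
  | (false, x, y) => Sum.inr (j + (x : ZMod n) + (y : ZMod n) * (k : ZMod n))

/-- The three neighbours. -/
def nb : GPRep → List GPRep
  | (true, x, y) => [(true, x + 1, y), (true, x - 1, y), (false, x, y)]
  | (false, x, y) => [(true, x, y), (false, x, y + 1), (false, x, y - 1)]

/-- Endpoints of the walks of length `d`. -/
def wl : ℕ → GPRep → List GPRep
  | 0, p => [p]
  | d + 1, p => (nb p).flatMap (wl d)

/-- Boolean equality of represented vertices. -/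
def eqv (E : ℤ → ℤ → Bool) (p q : GPRep) : Bool :=
  p.1 == q.1 && E (p.2.1 - q.2.1) (p.2.2 - q.2.2)

/-- Is there a walk of length `d`? -/
def hasW (E : ℤ → ℤ → Bool) (d : ℕ) (p q : GPRep) : Bool := (wl d p).any (fun r => eqv E r q)

/-- Boolean test for distance exactly `d`. -/
def isD (E : ℤ → ℤ → Bool) (d : ℕ) (p q : GPRep) : Bool :=
  hasW E d p q && (List.range d).all (fun e => !hasW E e p q)

/-- The base vertex. -/
def org : GPRep := (true, 0, 0)

/-- The four doubled vertices. -/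
def dbl : List GPRep := [(true, -1, -1), (true, -1, 1), (true, 1, -1), (true, 1, 1)]

/-- The vertices at distance four. -/
def lfour : List GPRep := dbl ++
  [(true, 4, 0), (true, -4, 0), (true, 0, 2), (true, 0, -2), (false, 3, 0), (false, -3, 0),
   (false, 2, 1), (false, 2, -1), (false, -2, 1), (false, -2, -1),
   (false, 1, 2), (false, 1, -2), (false, -1, 2), (false, -1, -2), (false, 0, 3), (false, 0, -3)]

/-- The complete finite check. -/
def chk (E : ℤ → ℤ → Bool) : Prop :=
  (∀ p ∈ wl 4 org, (lfour.any (fun q => eqv E p q) || !isD E 4 org p) = true) ∧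
  (∀ q ∈ lfour, isD E 4 org q = true) ∧
  lfour.Pairwise (fun p q => eqv E p q = false) ∧
  (nb org).Pairwise (fun p q => eqv E p q = false) ∧
  ∀ q ∈ lfour,
    (dbl.any (fun r => eqv E q r) = true ∧
      ((nb org).filter (fun p => isD E 3 p q)).length = 2) ∨
    (dbl.any (fun r => eqv E q r) = false ∧
      ((nb org).filter (fun p => isD E 3 p q)).length = 1)

instance (E : ℤ → ℤ → Bool) : Decidable (chk E) := by unfold chk; infer_instance

/-- The equality test for concrete parameters. -/
def Ec (m i : ℤ) (x y : ℤ) : Bool := (x + y * (i * m)) % (7 * m) == 0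

/-- The equality test for large parameters. -/
def Eg (x y : ℤ) : Bool := x == 0 && y % 7 == 0

set_option maxRecDepth 100000 in
theorem chk_g : chk Eg := by decide +kernel
theorem chk_4_2 : chk (Ec 4 2) := by decide +kernel
theorem chk_5_2 : chk (Ec 5 2) := by decide +kernel
theorem chk_5_3 : chk (Ec 5 3) := by decide +kernel
theorem chk_6_1 : chk (Ec 6 1) := by decide +kernel
theorem chk_6_2 : chk (Ec 6 2) := by decide +kernel
theorem chk_6_3 : chk (Ec 6 3) := by decide +kernel
theorem chk_7_1 : chk (Ec 7 1) := by decide +kernel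
theorem chk_7_2 : chk (Ec 7 2) := by decide +kernel
theorem chk_7_3 : chk (Ec 7 3) := by decide +kernel
theorem chk_8_1 : chk (Ec 8 1) := by decide +kernel
theorem chk_8_2 : chk (Ec 8 2) := by decide +kernel
theorem chk_8_3 : chk (Ec 8 3) := by decide +kernel

theorem bnd4 : ∀ p ∈ wl 4 org, -4 ≤ p.2.1 ∧ p.2.1 ≤ 4 := by decide +kernel
theorem bndL : ∀ p ∈ lfour, -4 ≤ p.2.1 ∧ p.2.1 ≤ 4 := by decide +kernel
theorem bndn : ∀ p ∈ nb org, -1 ≤ p.2.1 ∧ p.2.1 ≤ 1 := by decide +kernel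

theorem wl_bound (d : ℕ) : ∀ p q : GPRep, q ∈ wl d p → |q.2.1 - p.2.1| ≤ d := by
  induction d with
  | zero => intro p q h; simp [wl] at h; simp [h]
  | succ d ih =>
    intro p q h
    simp only [wl, List.mem_flatMap] at h
    obtain ⟨r, hr, hq⟩ := h
    have h1 := ih r q hq
    have h2 : |r.2.1 - p.2.1| ≤ 1 := by
      obtain ⟨t, x, y⟩ := p
      cases t <;> simp [nb] at hr <;> rcases hr with rfl | rfl | rfl <;> simp
    have := abs_add_le (q.2.1 - r.2.1) (r.2.1 - p.2.1)
    push_cast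
    have h3 : q.2.1 - r.2.1 + (r.2.1 - p.2.1) = q.2.1 - p.2.1 := by ring
    rw [h3] at this
    linarith

section
variable {n k : ℕ} (j : ZMod n)

theorem adj_phi (h1 : (1 : ZMod n) ≠ 0) (hk0 : (k : ZMod n) ≠ 0) (p : GPRep) (w : GPVertex n) :
    (GP n k).Adj (phi n k j p) w ↔ ∃ q ∈ nb p, phi n k j q = w := by
  obtain ⟨t, x, y⟩ := p
  cases t <;> rcases w with w | w <;>
    simp [GP, SimpleGraph.fromRel_adj, phi, GPRel, nb]
  · constructor
    · rintro ⟨-, h | h⟩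
      · left; rw [h]; ring
      · right; linear_combination h
    · rintro (h | h)
      · refine ⟨?_, Or.inl ?_⟩
        · intro h'; apply hk0; linear_combination h - h'
        · linear_combination -h
      · refine ⟨?_, Or.inr ?_⟩
        · intro h'; apply hk0; linear_combination h' - h
        · linear_combination h
  · constructor
    · rintro ⟨-, h | h⟩
      · left; rw [h]; ring
      · right; linear_combination h
    · rintro (h | h)
      · refine ⟨?_, Or.inl ?_⟩
        · intro h'; apply h1; linear_combination h - h'
        · linear_combination -h
      · refine ⟨?_, Or.inr ?_⟩
        · intro h'; apply h1; linear_combination h' - h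
        · linear_combination h
  · exact eq_comm

theorem walk_phi (h1 : (1 : ZMod n) ≠ 0) (hk0 : (k : ZMod n) ≠ 0) (d : ℕ) :
    ∀ (p : GPRep) (w : GPVertex n),
    (∃ c : (GP n k).Walk (phi n k j p) w, c.length = d) ↔ ∃ q ∈ wl d p, phi n k j q = w := by
  induction d with
  | zero =>
    intro p w
    constructor
    · rintro ⟨c, hc⟩
      exact ⟨p, by simp [wl], SimpleGraph.Walk.eq_of_length_eq_zero hc⟩
    · rintro ⟨q, hq, rfl⟩
      simp [wl] at hq
      subst hq
      exact ⟨SimpleGraph.Walk.nil, rfl⟩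
  | succ d ih =>
    intro p w
    constructor
    · rintro ⟨c, hc⟩
      cases c with
      | nil => simp at hc
      | cons h c =>
        obtain ⟨r, hr, rfl⟩ := (adj_phi j h1 hk0 p _).1 h
        obtain ⟨q, hq, hqw⟩ := (ih r w).1 ⟨c, by simpa using hc⟩
        exact ⟨q, by simp only [wl, List.mem_flatMap]; exact ⟨r, hr, hq⟩, hqw⟩
    · rintro ⟨q, hq, hqw⟩
      simp only [wl, List.mem_flatMap] at hq
      obtain ⟨r, hr, hq⟩ := hq
      obtain ⟨c, hc⟩ := (ih r w).2 ⟨q, hq, hqw⟩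
      exact ⟨SimpleGraph.Walk.cons ((adj_phi j h1 hk0 p _).2 ⟨r, hr, rfl⟩) c, by simp [hc]⟩

theorem dist_iff_walk {V : Type*} (G : SimpleGraph V) (u w : V) (d : ℕ) (hd : 0 < d) :
    G.dist u w = d ↔ (∃ c : G.Walk u w, c.length = d) ∧
      ∀ e < d, ¬ ∃ c : G.Walk u w, c.length = e := by
  constructor
  · intro h
    have hr : G.Reachable u w := by
      by_contra hr
      rw [SimpleGraph.dist_eq_zero_of_not_reachable hr] at h
      omega
    refine ⟨?_, ?_⟩
    · obtain ⟨c, hc⟩ := hr.exists_walk_length_eq_dist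
      exact ⟨c, by omega⟩
    · rintro e he ⟨c, hc⟩
      have := SimpleGraph.dist_le c
      omega
  · rintro ⟨⟨c, hc⟩, h⟩
    have h1 := SimpleGraph.dist_le c
    obtain ⟨c', hc'⟩ := (SimpleGraph.Walk.reachable c).exists_walk_length_eq_dist
    by_contra hne
    exact h (G.dist u w) (by omega) ⟨c', hc'⟩

theorem eqv_iff (E : ℤ → ℤ → Bool)
    (hE : ∀ x y : ℤ, -8 ≤ x → x ≤ 8 →
      (E x y = true ↔ (x : ZMod n) + (y : ZMod n) * (k : ZMod n) = 0))
    (p q : GPRep) (hp : -4 ≤ p.2.1 ∧ p.2.1 ≤ 4) (hq : -4 ≤ q.2.1 ∧ q.2.1 ≤ 4) :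
    eqv E p q = true ↔ phi n k j p = phi n k j q := by
  obtain ⟨s, x, y⟩ := p
  obtain ⟨t, z, w⟩ := q
  simp only at hp hq
  have := hE (x - z) (y - w) (by omega) (by omega)
  cases s <;> cases t <;> simp [eqv, phi, this]
  all_goals
    constructor <;> intro h <;> linear_combination h

theorem isD_iff (h1 : (1 : ZMod n) ≠ 0) (hk0 : (k : ZMod n) ≠ 0) (E : ℤ → ℤ → Bool)
    (hE : ∀ x y : ℤ, -8 ≤ x → x ≤ 8 →
      (E x y = true ↔ (x : ZMod n) + (y : ZMod n) * (k : ZMod n) = 0))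
    (d : ℕ) (hd : 0 < d) (p q : GPRep) (hp : |p.2.1| + d ≤ 4) (hq : -4 ≤ q.2.1 ∧ q.2.1 ≤ 4) :
    isD E d p q = true ↔ (GP n k).dist (phi n k j p) (phi n k j q) = d := by
  have hw : ∀ e ≤ d, (hasW E e p q = true ↔
      ∃ c : (GP n k).Walk (phi n k j p) (phi n k j q), c.length = e) := by
    intro e he
    rw [walk_phi j h1 hk0, hasW, List.any_eq_true]
    refine exists_congr fun r => and_congr_right fun hr => ?_
    have hb := wl_bound e p r hr
    refine eqv_iff j E hE r q ?_ hq
    have : (e : ℤ) ≤ d := by exact_mod_cast he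
    have hx := abs_le.1 hb
    have h3 := le_abs_self p.2.1
    have h4 := neg_abs_le p.2.1
    constructor <;> linarith [hx.1, hx.2]
  rw [dist_iff_walk _ _ _ _ hd, isD, Bool.and_eq_true, hw d le_rfl, List.all_eq_true]
  refine and_congr_right fun _ => ?_
  simp only [List.mem_range]
  refine forall_congr' fun e => forall_congr' fun he => ?_
  rw [← hw e he.le]
  simp

theorem core (h1 : (1 : ZMod n) ≠ 0) (hk0 : (k : ZMod n) ≠ 0) (E : ℤ → ℤ → Bool)
    (hE : ∀ x y : ℤ, -8 ≤ x → x ≤ 8 →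
      (E x y = true ↔ (x : ZMod n) + (y : ZMod n) * (k : ZMod n) = 0))
    (hc : chk E) :
      {w : GPVertex n | (GP n k).dist (Sum.inl j) w = 4}.ncard = 20 ∧
      (∀ w ∈ outerDoubled n k j, (GP n k).dist (Sum.inl j) w = 4) ∧
      ∀ w : GPVertex n, (GP n k).dist (Sum.inl j) w = 4 →
        ((w ∈ outerDoubled n k j ∧
            {v : GPVertex n | (GP n k).Adj (Sum.inl j) v ∧
              (GP n k).dist v w = 3}.ncard = 2) ∨
         (w ∉ outerDoubled n k j ∧
            {v : GPVertex n | (GP n k).Adj (Sum.inl j) v ∧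
              (GP n k).dist v w = 3}.ncard = 1)) := by
  classical
  obtain ⟨c1, c2, c3, c4, c5⟩ := hc
  have horg : (Sum.inl j : GPVertex n) = phi n k j org := by simp [phi, org]
  have hdbl : ∀ w, w ∈ outerDoubled n k j ↔ ∃ r ∈ dbl, phi n k j r = w := by
    intro w
    simp only [outerDoubled, dbl, phi, Set.mem_insert_iff, Set.mem_singleton_iff,
      List.mem_cons, List.not_mem_nil, or_false, exists_eq_or_imp, exists_eq_left, eq_comm (a := w)]
    push_cast
    refine or_congr ?_ (or_congr ?_ (or_congr ?_ ?_)) <;>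
    · apply Eq.congr _ rfl
      congr 1
      ring
  have hds : ∀ r ∈ dbl, r ∈ lfour := fun r hr => List.mem_append_left _ hr
  -- injectivity turns a pairwise distinct list of representatives into a cardinality
  have hcard : ∀ L : List GPRep, (∀ p ∈ L, -4 ≤ p.2.1 ∧ p.2.1 ≤ 4) →
      L.Pairwise (fun p q => eqv E p q = false) →
      {w : GPVertex n | ∃ q ∈ L, phi n k j q = w}.ncard = L.length := by
    intro L hL hP
    have hnd : (L.map (phi n k j)).Nodup := by
      rw [List.Nodup, List.pairwise_map]
      refine List.Pairwise.imp_of_mem ?_ hP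
      intro a b ha hb hab heq
      rw [(eqv_iff j E hE a b (hL a ha) (hL b hb)).2 heq] at hab
      exact absurd hab (by simp)
    have : {w : GPVertex n | ∃ q ∈ L, phi n k j q = w} =
        ((L.map (phi n k j)).toFinset : Set (GPVertex n)) := by
      ext w; simp
    rw [this, Set.ncard_coe_finset, List.toFinset_card_of_nodup hnd, List.length_map]
  have hd4 : ∀ w, (GP n k).dist (Sum.inl j) w = 4 ↔ ∃ q ∈ lfour, phi n k j q = w := by
    intro w
    rw [horg]
    constructor
    · intro h
      obtain ⟨q, hq, rfl⟩ := (walk_phi j h1 hk0 4 org w).1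
        ((dist_iff_walk _ _ _ 4 (by norm_num)).1 h).1
      have hb := bnd4 q hq
      have h3 := c1 q hq
      rw [(isD_iff j h1 hk0 E hE 4 (by norm_num) org q (by simp [org]) hb).2 h] at h3
      simp only [Bool.not_true, Bool.or_false, List.any_eq_true] at h3
      obtain ⟨r, hr, he⟩ := h3
      exact ⟨r, hr, ((eqv_iff j E hE q r hb (bndL r hr)).1 he).symm⟩
    · rintro ⟨q, hq, rfl⟩
      exact (isD_iff j h1 hk0 E hE 4 (by norm_num) org q (by simp [org]) (bndL q hq)).1 (c2 q hq)
  refine ⟨?_, ?_, ?_⟩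
  · simp only [hd4]
    rw [hcard lfour bndL c3]
    rfl
  · intro w hw
    obtain ⟨r, hr, rfl⟩ := (hdbl w).1 hw
    exact (hd4 _).2 ⟨r, hds r hr, rfl⟩
  · intro w hw
    obtain ⟨q, hq, rfl⟩ := (hd4 w).1 hw
    have hqb := bndL q hq
    have hset : {v : GPVertex n | (GP n k).Adj (Sum.inl j) v ∧
        (GP n k).dist v (phi n k j q) = 3}.ncard =
        ((nb org).filter (fun p => isD E 3 p q)).length := by
      rw [← hcard _ _ (List.Pairwise.filter _ c4)]
      · congr 1
        ext v
        rw [horg]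
        simp only [Set.mem_ofPred_eq, adj_phi j h1 hk0, List.mem_filter]
        constructor
        · rintro ⟨⟨p, hp, rfl⟩, h⟩
          have hpb := bndn p hp
          exact ⟨p, ⟨hp, (isD_iff j h1 hk0 E hE 3 (by norm_num) p q
            (by have := abs_le.2 hpb; push_cast; linarith) hqb).2 h⟩, rfl⟩
        · rintro ⟨p, ⟨hp, h⟩, rfl⟩
          have hpb := bndn p hp
          exact ⟨⟨p, hp, rfl⟩, (isD_iff j h1 hk0 E hE 3 (by norm_num) p q
            (by have := abs_le.2 hpb; push_cast; linarith) hqb).1 h⟩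
      · intro p hp
        have := bndn p (List.mem_filter.1 hp).1
        omega
    have hmem : phi n k j q ∈ outerDoubled n k j ↔ dbl.any (fun r => eqv E q r) = true := by
      rw [hdbl, List.any_eq_true]
      refine exists_congr fun r => and_congr_right fun hr => ?_
      rw [eqv_iff j E hE q r hqb (bndL r (hds r hr))]
      exact eq_comm
    rw [hset, hmem]
    rcases c5 q hq with ⟨a, b⟩ | ⟨a, b⟩
    · exact Or.inl ⟨a, b⟩
    · exact Or.inr ⟨by simp [a], b⟩
end

theorem Ec_spec (m i : ℕ) (x y : ℤ) :
    Ec m i x y = true ↔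
      (x : ZMod (7 * m)) + (y : ZMod (7 * m)) * ((i * m : ℕ) : ZMod (7 * m)) = 0 := by
  have : (x : ZMod (7 * m)) + (y : ZMod (7 * m)) * ((i * m : ℕ) : ZMod (7 * m)) =
    ((x + y * (i * m) : ℤ) : ZMod (7 * m)) := by push_cast; ring
  rw [this, ZMod.intCast_zmod_eq_zero_iff_dvd]
  rw [Ec, beq_iff_eq, ← Int.dvd_iff_emod_eq_zero]
  push_cast
  rfl

theorem Eg_spec (m i : ℕ) (hm : 9 ≤ m) (hi : i = 1 ∨ i = 2 ∨ i = 3) (x y : ℤ)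
    (h1 : -8 ≤ x) (h2 : x ≤ 8) :
    Eg x y = true ↔
      (x : ZMod (7 * m)) + (y : ZMod (7 * m)) * ((i * m : ℕ) : ZMod (7 * m)) = 0 := by
  rw [← Ec_spec]
  simp only [Eg, Ec, Bool.and_eq_true, beq_iff_eq]
  rw [← Int.dvd_iff_emod_eq_zero, ← Int.dvd_iff_emod_eq_zero]
  constructor
  · rintro ⟨rfl, z, rfl⟩
    exact ⟨z * i, by ring⟩
  · rintro ⟨z, hz⟩
    have hx : x = 0 := by
      apply Int.eq_zero_of_abs_lt_dvd (m := (m : ℤ))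
      · exact ⟨7 * z - y * i, by linear_combination hz⟩
      · rw [abs_lt]; constructor <;> omega
    refine ⟨hx, ?_⟩
    subst hx
    have : y * i = 7 * z := by
      have hm0 : (m : ℤ) ≠ 0 := by omega
      apply mul_right_cancel₀ hm0
      linear_combination hz
    rcases hi with rfl | rfl | rfl <;> push_cast at this <;> omega

/-- For every outer vertex `a_j`, there are exactly `20` vertices at distance exactly
`4`; the vertices `a_{j-k-1}, a_{j+k-1}, a_{j-k+1}, a_{j+k+1}` are exactly the ones
reached by paths of length `4` through two distinct neighbours of `a_j`, and every
other vertex at distance `4` is reached through a unique neighbour of `a_j`. -/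
theorem GP_outer_distance_four (n k : ℕ)
    (hn : 0 < n) (hk : 0 < k)
    (hi : ∃ i, i ∈ ({1, 2, 3} : Set ℕ) ∧ i * n = 7 * k)
    (h2k : 2 * k < n)
    (hbig : 42 ≤ n ∨ (n = 28 ∧ k = 8) ∨ (n = 35 ∧ k = 10) ∨ (n = 35 ∧ k = 15)) :
    ∀ j : ZMod n,
      {w : GPVertex n | (GP n k).dist (Sum.inl j) w = 4}.ncard = 20 ∧
      (∀ w ∈ outerDoubled n k j, (GP n k).dist (Sum.inl j) w = 4) ∧
      ∀ w : GPVertex n, (GP n k).dist (Sum.inl j) w = 4 →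
        ((w ∈ outerDoubled n k j ∧
            {v : GPVertex n | (GP n k).Adj (Sum.inl j) v ∧
              (GP n k).dist v w = 3}.ncard = 2) ∨
         (w ∉ outerDoubled n k j ∧
            {v : GPVertex n | (GP n k).Adj (Sum.inl j) v ∧
              (GP n k).dist v w = 3}.ncard = 1)) := by

  intro j
  obtain ⟨i, hi, hnk⟩ := hi
  simp only [Set.mem_insert_iff, Set.mem_singleton_iff] at hi
  obtain ⟨m, rfl⟩ : ∃ m, n = 7 * m := by
    have : 7 ∣ n := by rcases hi with rfl | rfl | rfl <;> omega
    exact this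
  obtain rfl : k = i * m := by
    have : 7 * k = 7 * (i * m) := by rw [← hnk]; ring
    omega
  have h1 : (1 : ZMod (7 * m)) ≠ 0 := by
    have : Fact (1 < 7 * m) := ⟨by omega⟩
    exact one_ne_zero
  have hk0 : ((i * m : ℕ) : ZMod (7 * m)) ≠ 0 := by
    rw [Ne, ZMod.natCast_eq_zero_iff]
    intro h
    have := Nat.le_of_dvd hk h
    omega
  have hE : ∀ x y : ℤ, -8 ≤ x → x ≤ 8 → (Ec m i x y = true ↔
      (x : ZMod (7 * m)) + (y : ZMod (7 * m)) * ((i * m : ℕ) : ZMod (7 * m)) = 0) :=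
    fun x y _ _ => Ec_spec m i x y
  by_cases hm : 9 ≤ m
  · exact core j h1 hk0 Eg (Eg_spec m i hm hi) chk_g
  · have hm' : (m = 4 ∧ i = 2) ∨ (m = 5 ∧ (i = 2 ∨ i = 3)) ∨ m = 6 ∨ m = 7 ∨ m = 8 := by
      rcases hi with rfl | rfl | rfl <;> omega
    refine core j h1 hk0 (Ec m i) hE ?_
    rcases hm' with ⟨rfl, rfl⟩ | ⟨rfl, rfl | rfl⟩ | rfl | rfl | rfl
    · exact chk_4_2
    · exact chk_5_2
    · exact chk_5_3
    · rcases hi with rfl | rfl | rfl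
      · exact chk_6_1
      · exact chk_6_2
      · exact chk_6_3
    · rcases hi with rfl | rfl | rfl
      · exact chk_7_1
      · exact chk_7_2
      · exact chk_7_3
    · rcases hi with rfl | rfl | rfl
      · exact chk_8_1
      · exact chk_8_2
      · exact chk_8_3
end

section
/- Let n and k be positive integers with i·n = 7k for some i ∈ {1,2,3} and 2k < n, and suppose that either n ≥ 42 or (n,k) ∈ {(28,8),(35,10),(35,15)}. Then for every inner vertex b_j of GP(n,k), there are exactly 18 vertices at graph distance exactly 4 from b_j; moreover the only coincidences among endpoints of the shortest paths of length 4 from b_j through distinct neighbours are the four pairs given by the vertices b_{j-k-1}, b_{j-k+1}, b_{j+k-1} and b_{j+k+1}, each of which is reached through two distinct neighbours of b_j. -/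
open SimpleGraph

/-- The four inner vertices at distance `4` from `b_j` that are each reached via two
distinct neighbours of `b_j`. -/
def innerDoubled (n k : ℕ) (j : ZMod n) : Set (GPVertex n) :=
  {Sum.inr (j - (k : ZMod n) - 1), Sum.inr (j - (k : ZMod n) + 1),
   Sum.inr (j + (k : ZMod n) - 1), Sum.inr (j + (k : ZMod n) + 1)}

/-- Code for a vertex relative to a base point: `(outer?, α, β)` is position `α k + β`. -/
abbrev GPCode := Bool × ℤ × ℤ

/-- The vertex coded by `c`. -/
def gpPhi (n k : ℕ) (j : ZMod n) (c : GPCode) : GPVertex n :=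
  match c with
  | (true, a, b) => Sum.inl (j + (a : ZMod n) * (k : ZMod n) + (b : ZMod n))
  | (false, a, b) => Sum.inr (j + (a : ZMod n) * (k : ZMod n) + (b : ZMod n))

/-- Coded neighbours. -/
def gpNbr (c : GPCode) : List GPCode :=
  match c with
  | (true, a, b) => [(true, a, b + 1), (true, a, b - 1), (false, a, b)]
  | (false, a, b) => [(false, a + 1, b), (false, a - 1, b), (true, a, b)]

/-- Coded balls. -/
def gpBall : ℕ → GPCode → List GPCode
  | 0, c => [c]
  | r + 1, c => ((c :: gpNbr c).flatMap (gpBall r)).dedup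

/-- Coded equality of vertices. -/
def gpEq (n k : ℕ) (c d : GPCode) : Bool :=
  (c.1 == d.1) && (((c.2.1 - d.2.1) * (k : ℤ) + (c.2.2 - d.2.2)) % (n : ℤ) == 0)

/-- Coded membership. -/
def gpMem (e : GPCode → GPCode → Bool) (c : GPCode) (L : List GPCode) : Bool :=
  L.any (fun d => e d c)

def gpBase : GPCode := (false, 0, 0)

def gpDbl : List GPCode :=
  [(false, -1, -1), (false, -1, 1), (false, 1, -1), (false, 1, 1)]

def gpRest : List GPCode :=
  [(false, 0, 2), (false, 0, -2), (true, 0, 3), (true, 0, -3),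
   (true, 1, 2), (true, 1, -2), (true, -1, 2), (true, -1, -2),
   (true, 2, 1), (true, 2, -1), (true, -2, 1), (true, -2, -1),
   (true, 3, 0), (true, -3, 0)]

def gpSph : List GPCode := gpDbl ++ gpRest

def gpDist3 (e : GPCode → GPCode → Bool) (t : GPCode) (v : GPCode) : Bool :=
  gpMem e t (gpBall 3 v) && !(gpMem e t (gpBall 2 v))

def gpDistinct (e : GPCode → GPCode → Bool) : List GPCode → Bool
  | [] => true
  | c :: L => !(gpMem e c L) && gpDistinct e L

def gpCheck (e : GPCode → GPCode → Bool) : Bool :=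
  gpDistinct e gpSph && gpDistinct e (gpNbr gpBase) &&
  gpSph.all (fun t => gpMem e t (gpBall 4 gpBase) && !(gpMem e t (gpBall 3 gpBase))) &&
  (gpBall 4 gpBase).all (fun c => gpMem e c (gpBall 3 gpBase) || gpMem e c gpSph) &&
  gpDbl.all (fun t => ((gpNbr gpBase).filter (gpDist3 e t)).length == 2) &&
  gpRest.all (fun t => ((gpNbr gpBase).filter (gpDist3 e t)).length == 1)

def gpBox (c : GPCode) : Prop := -4 ≤ c.2.2 ∧ c.2.2 ≤ 4

instance (c : GPCode) : Decidable (gpBox c) := by unfold gpBox; infer_instance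

theorem gpCheck_list : ∀ p ∈ [(28, 8), (35, 10), (35, 15), (42, 6), (42, 12), (42, 18),
    (49, 7), (49, 14), (49, 21), (56, 8), (56, 16), (56, 24), (63, 9), (63, 18), (63, 27)],
    gpCheck (gpEq p.1 p.2) = true := by
  decide +kernel

theorem gpBox_ball4 : ∀ c ∈ gpBall 4 gpBase, gpBox c := by decide +kernel
theorem gpBox_ball3 : ∀ c ∈ gpBall 3 gpBase, gpBox c := by decide +kernel
theorem gpBox_sph : ∀ c ∈ gpSph, gpBox c := by decide +kernel
theorem gpBox_nbr : ∀ c ∈ gpNbr gpBase, gpBox c := by decide +kernel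
theorem gpBox_nbr3 : ∀ v ∈ gpNbr gpBase, ∀ c ∈ gpBall 3 v, gpBox c := by decide +kernel
theorem gpBox_nbr2 : ∀ v ∈ gpNbr gpBase, ∀ c ∈ gpBall 2 v, gpBox c := by decide +kernel

theorem gpPhi_eq_iff (n k : ℕ) (j : ZMod n) (c d : GPCode) :
    gpPhi n k j c = gpPhi n k j d ↔ gpEq n k c d = true := by
  have key : ∀ a b a₂ b₂ : ℤ,
      (j + (a : ZMod n) * (k : ZMod n) + (b : ZMod n)
        = j + (a₂ : ZMod n) * (k : ZMod n) + (b₂ : ZMod n)) ↔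
      ((a - a₂) * (k : ℤ) + (b - b₂)) % (n : ℤ) = 0 := by
    intro a b a₂ b₂
    rw [← Int.dvd_iff_emod_eq_zero, ← ZMod.intCast_zmod_eq_zero_iff_dvd, ← sub_eq_zero]
    push_cast
    constructor <;> intro h <;> rw [← h] <;> ring
  obtain ⟨x, a, b⟩ := c
  obtain ⟨y, a₂, b₂⟩ := d
  cases x <;> cases y <;> simp only [gpPhi, gpEq, Sum.inl.injEq, Sum.inr.injEq, key] <;> simp

theorem gp_dvd_aux (m : ℕ) (hm : 9 ≤ m) (x b : ℤ) (h1 : -8 ≤ b) (h2 : b ≤ 8) :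
    (x * m + b) % ((7 * m : ℕ) : ℤ) = 0 ↔ b = 0 ∧ 7 ∣ x := by
  rw [← Int.dvd_iff_emod_eq_zero]
  push_cast
  constructor
  · intro h
    have hmb : (m : ℤ) ∣ b := by
      have h3 : (m : ℤ) ∣ x * m + b := (Dvd.intro_left _ rfl).trans h
      exact (Int.dvd_add_right (Dvd.intro_left _ rfl)).1 h3
    have hb : b = 0 := by
      apply Int.eq_zero_of_abs_lt_dvd hmb
      rw [abs_lt]; constructor <;> omega
    subst hb
    refine ⟨rfl, ?_⟩
    rw [add_zero] at h
    exact (mul_dvd_mul_iff_right (by omega : (m : ℤ) ≠ 0)).1 h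
  · rintro ⟨rfl, y, rfl⟩
    exact ⟨y, by ring⟩

theorem gp_transfer (n k : ℕ)
    (hi : ∃ i, i ∈ ({1, 2, 3} : Set ℕ) ∧ i * n = 7 * k)
    (hbig : 42 ≤ n ∨ (n = 28 ∧ k = 8) ∨ (n = 35 ∧ k = 10) ∨ (n = 35 ∧ k = 15)) :
    ∃ e : GPCode → GPCode → Bool, gpCheck e = true ∧
      ∀ c d, gpBox c → gpBox d → gpEq n k c d = e c d := by
  rcases hbig with h | ⟨rfl, rfl⟩ | ⟨rfl, rfl⟩ | ⟨rfl, rfl⟩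
  · obtain ⟨i, hi, hik⟩ := hi
    simp only [Set.mem_insert_iff, Set.mem_singleton_iff] at hi
    obtain ⟨m, rfl⟩ : ∃ m, n = 7 * m := by
      rcases hi with rfl | rfl | rfl <;> exact ⟨n / 7, by omega⟩
    obtain rfl : k = i * m := by
      rcases hi with rfl | rfl | rfl <;> omega
    rcases Nat.lt_or_ge m 9 with hm | hm
    · refine ⟨gpEq (7 * m) (i * m), ?_, fun _ _ _ _ => rfl⟩
      apply gpCheck_list (7 * m, i * m)
      have hm6 : 6 ≤ m := by omega
      interval_cases m <;> rcases hi with rfl | rfl | rfl <;> simp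
    · refine ⟨gpEq (7 * 9) (i * 9), ?_, ?_⟩
      · apply gpCheck_list (7 * 9, i * 9)
        rcases hi with rfl | rfl | rfl <;> simp
      · intro c d hc hd
        unfold gpBox at hc hd
        have e1 := gp_dvd_aux m hm ((c.2.1 - d.2.1) * i) (c.2.2 - d.2.2) (by omega) (by omega)
        have e2 := gp_dvd_aux 9 le_rfl ((c.2.1 - d.2.1) * i) (c.2.2 - d.2.2)
          (by omega) (by omega)
        rw [← e2, mul_assoc, mul_assoc, ← Nat.cast_mul, ← Nat.cast_mul] at e1
        unfold gpEq
        congr 1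
        rw [Bool.eq_iff_iff, beq_iff_eq, beq_iff_eq]
        exact e1
  · exact ⟨_, gpCheck_list (28, 8) (by simp), fun _ _ _ _ => rfl⟩
  · exact ⟨_, gpCheck_list (35, 10) (by simp), fun _ _ _ _ => rfl⟩
  · exact ⟨_, gpCheck_list (35, 15) (by simp), fun _ _ _ _ => rfl⟩

theorem gp_adj_iff (n k : ℕ) (h1 : (1 : ZMod n) ≠ 0) (hk : (k : ZMod n) ≠ 0) (j : ZMod n)
    (c : GPCode) (v : GPVertex n) :
    (GP n k).Adj (gpPhi n k j c) v ↔ ∃ d ∈ gpNbr c, gpPhi n k j d = v := by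
  obtain ⟨x, a, b⟩ := c
  unfold GP
  rw [SimpleGraph.fromRel_adj]
  cases x <;> rcases v with v | v <;> simp [gpPhi, gpNbr, GPRel]
  · have e1 : j + (a + 1 : ZMod n) * (k : ZMod n) + b
        = (j + (a : ZMod n) * (k : ZMod n) + (b : ZMod n)) + k := by ring
    have e2 : j + (a - 1 : ZMod n) * (k : ZMod n) + b
        = (j + (a : ZMod n) * (k : ZMod n) + (b : ZMod n)) - k := by ring
    rw [e1, e2]
    generalize j + (a : ZMod n) * (k : ZMod n) + (b : ZMod n) = p
    constructor
    · rintro ⟨-, h | h⟩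
      · exact Or.inl h.symm
      · right; rw [h]; ring
    · rintro (rfl | rfl)
      · simp [hk]
      · simp [hk, sub_eq_iff_eq_add, eq_sub_iff_add_eq]
  · have e1 : j + (a : ZMod n) * (k : ZMod n) + (b + 1 : ZMod n)
        = (j + (a : ZMod n) * (k : ZMod n) + (b : ZMod n)) + 1 := by ring
    have e2 : j + (a : ZMod n) * (k : ZMod n) + (b - 1 : ZMod n)
        = (j + (a : ZMod n) * (k : ZMod n) + (b : ZMod n)) - 1 := by ring
    rw [e1, e2]
    generalize j + (a : ZMod n) * (k : ZMod n) + (b : ZMod n) = p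
    constructor
    · rintro ⟨-, h | h⟩
      · exact Or.inl h.symm
      · right; rw [h]; ring
    · rintro (rfl | rfl)
      · simp [h1]
      · simp [h1, sub_eq_iff_eq_add, eq_sub_iff_add_eq]
  · exact eq_comm

theorem gp_ball_iff (n k : ℕ) (h1 : (1 : ZMod n) ≠ 0) (hk : (k : ZMod n) ≠ 0) (j : ZMod n)
    (r : ℕ) : ∀ (c : GPCode) (w : GPVertex n),
    (∃ p : (GP n k).Walk (gpPhi n k j c) w, p.length ≤ r) ↔
      ∃ d ∈ gpBall r c, gpPhi n k j d = w := by
  induction r with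
  | zero =>
    intro c w
    simp only [gpBall, List.mem_singleton, exists_eq_left]
    constructor
    · rintro ⟨p, hp⟩
      exact SimpleGraph.Walk.eq_of_length_eq_zero (Nat.le_zero.1 hp)
    · rintro rfl
      exact ⟨SimpleGraph.Walk.nil, le_rfl⟩
  | succ r ih =>
    intro c w
    simp only [gpBall, List.mem_dedup, List.mem_flatMap]
    constructor
    · rintro ⟨p, hp⟩
      have gen : ∀ (u : GPVertex n) (q : (GP n k).Walk u w), u = gpPhi n k j c →
          q.length ≤ r + 1 →
          ∃ d, (∃ a ∈ c :: gpNbr c, d ∈ gpBall r a) ∧ gpPhi n k j d = w := by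
        intro u q hu hq
        cases q with
        | nil =>
          obtain ⟨d, hd, hdw⟩ := (ih c w).1 (hu ▸ ⟨SimpleGraph.Walk.nil, Nat.zero_le _⟩)
          exact ⟨d, ⟨c, by simp, hd⟩, hdw⟩
        | cons hadj q =>
          subst hu
          obtain ⟨v, hv, rfl⟩ := (gp_adj_iff n k h1 hk j c _).1 hadj
          rw [SimpleGraph.Walk.length_cons] at hq
          obtain ⟨d, hd, hdw⟩ := (ih v w).1 ⟨q, by omega⟩
          exact ⟨d, ⟨v, by simp [hv], hd⟩, hdw⟩
      exact gen _ p rfl hp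
    · rintro ⟨d, ⟨a, ha, hd⟩, hdw⟩
      obtain ⟨p, hp⟩ := (ih a w).2 ⟨d, hd, hdw⟩
      rcases List.mem_cons.1 ha with rfl | ha
      · exact ⟨p, by omega⟩
      · have hadj := (gp_adj_iff n k h1 hk j c _).2 ⟨a, ha, rfl⟩
        exact ⟨SimpleGraph.Walk.cons hadj p, by rw [SimpleGraph.Walk.length_cons]; omega⟩

theorem gp_dist_iff (n k : ℕ) (h1 : (1 : ZMod n) ≠ 0) (hk : (k : ZMod n) ≠ 0) (j : ZMod n)
    (r : ℕ) (c : GPCode) (w : GPVertex n) :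
    (GP n k).dist (gpPhi n k j c) w = r + 1 ↔
      (∃ d ∈ gpBall (r + 1) c, gpPhi n k j d = w) ∧
      ¬ ∃ d ∈ gpBall r c, gpPhi n k j d = w := by
  rw [← gp_ball_iff n k h1 hk, ← gp_ball_iff n k h1 hk]
  constructor
  · intro h
    have hr : (GP n k).Reachable (gpPhi n k j c) w := by
      by_contra hr
      rw [SimpleGraph.dist_eq_zero_of_not_reachable hr] at h
      omega
    obtain ⟨p, hp⟩ := hr.exists_walk_length_eq_dist
    refine ⟨⟨p, by omega⟩, ?_⟩
    rintro ⟨q, hq⟩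
    have := SimpleGraph.dist_le q
    omega
  · rintro ⟨⟨p, hp⟩, hn⟩
    obtain ⟨q, hq⟩ := p.reachable.exists_walk_length_eq_dist
    have h3 := SimpleGraph.dist_le p
    by_contra hne
    exact hn ⟨q, by omega⟩

theorem gp_mem_iff {n k : ℕ} {j : ZMod n} {e : GPCode → GPCode → Bool}
    (he : ∀ c d, gpBox c → gpBox d → gpEq n k c d = e c d)
    (c : GPCode) (L : List GPCode) (hc : gpBox c) (hL : ∀ d ∈ L, gpBox d) :
    gpMem e c L = true ↔ ∃ d ∈ L, gpPhi n k j d = gpPhi n k j c := by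
  unfold gpMem
  rw [List.any_eq_true]
  refine exists_congr fun d => and_congr_right fun hd => ?_
  rw [gpPhi_eq_iff, he d c (hL d hd) hc]

theorem gp_nodup {n k : ℕ} {j : ZMod n} {e : GPCode → GPCode → Bool}
    (he : ∀ c d, gpBox c → gpBox d → gpEq n k c d = e c d) :
    ∀ (L : List GPCode), (∀ d ∈ L, gpBox d) → gpDistinct e L = true →
      (L.map (gpPhi n k j)).Nodup := by
  intro L
  induction L with
  | nil => intro _ _; simp
  | cons c L ih =>
    intro hL h
    simp only [gpDistinct, Bool.and_eq_true, Bool.not_eq_true'] at h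
    rw [List.map_cons, List.nodup_cons]
    refine ⟨?_, ih (fun d hd => hL d (List.mem_cons_of_mem _ hd)) h.2⟩
    intro hm
    rw [List.mem_map, ← gp_mem_iff he c L (hL c (by simp))
      (fun d hd => hL d (List.mem_cons_of_mem _ hd)), h.1] at hm
    exact absurd hm (by simp)

theorem gp_ncard {n k : ℕ} {j : ZMod n} (L : List GPCode)
    (h : (L.map (gpPhi n k j)).Nodup) (S : Set (GPVertex n))
    (hS : ∀ w, w ∈ S ↔ ∃ d ∈ L, gpPhi n k j d = w) : S.ncard = L.length := by
  classical
  have : S = ((L.map (gpPhi n k j)).toFinset : Set (GPVertex n)) := by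
    ext w
    rw [hS]
    simp
  rw [this, Set.ncard_coe_finset, List.toFinset_card_of_nodup h, List.length_map]

/-- For every inner vertex `b_j`, there are exactly `18` vertices at distance exactly
`4`; the vertices `b_{j-k-1}, b_{j-k+1}, b_{j+k-1}, b_{j+k+1}` are exactly the ones
reached by shortest paths of length `4` through two distinct neighbours of `b_j`, and
every other vertex at distance `4` is reached through a unique neighbour of `b_j`. -/
theorem GP_inner_distance_four (n k : ℕ)
    (hn : 0 < n) (hk : 0 < k)
    (hi : ∃ i, i ∈ ({1, 2, 3} : Set ℕ) ∧ i * n = 7 * k)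
    (h2k : 2 * k < n)
    (hbig : 42 ≤ n ∨ (n = 28 ∧ k = 8) ∨ (n = 35 ∧ k = 10) ∨ (n = 35 ∧ k = 15)) :
    ∀ j : ZMod n,
      {w : GPVertex n | (GP n k).dist (Sum.inr j) w = 4}.ncard = 18 ∧
      (∀ w ∈ innerDoubled n k j, (GP n k).dist (Sum.inr j) w = 4) ∧
      ∀ w : GPVertex n, (GP n k).dist (Sum.inr j) w = 4 →
        ((w ∈ innerDoubled n k j ∧
            {v : GPVertex n | (GP n k).Adj (Sum.inr j) v ∧
              (GP n k).dist v w = 3}.ncard = 2) ∨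
         (w ∉ innerDoubled n k j ∧
            {v : GPVertex n | (GP n k).Adj (Sum.inr j) v ∧
              (GP n k).dist v w = 3}.ncard = 1)) := by
  intro j
  have h1 : (1 : ZMod n) ≠ 0 := by
    intro h
    have hdvd : ((1 : ℕ) : ZMod n) = 0 := by exact_mod_cast h
    rw [ZMod.natCast_eq_zero_iff] at hdvd
    have := Nat.le_of_dvd one_pos hdvd
    omega
  have hk0 : (k : ZMod n) ≠ 0 := by
    intro hdvd
    rw [ZMod.natCast_eq_zero_iff] at hdvd
    have := Nat.le_of_dvd hk hdvd
    omega
  obtain ⟨e, hcheck, he⟩ := gp_transfer n k hi hbig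
  simp only [gpCheck, Bool.and_eq_true, List.all_eq_true, Bool.or_eq_true, beq_iff_eq,
    Bool.not_eq_true'] at hcheck
  obtain ⟨⟨⟨⟨⟨cS, cN⟩, cT⟩, cB⟩, c2⟩, c1⟩ := hcheck
  have hbase : (Sum.inr j : GPVertex n) = gpPhi n k j gpBase := by simp [gpPhi, gpBase]
  have hdist : ∀ w, (GP n k).dist (Sum.inr j) w = 4 ↔ ∃ d ∈ gpSph, gpPhi n k j d = w := by
    intro w
    rw [hbase, gp_dist_iff n k h1 hk0 j 3]
    constructor
    · rintro ⟨⟨d, hd, rfl⟩, hn⟩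
      have hb := gpBox_ball4 d hd
      rcases cB d hd with h | h
      · exact absurd ((gp_mem_iff he d _ hb gpBox_ball3).1 h) hn
      · exact (gp_mem_iff he d _ hb gpBox_sph).1 h
    · rintro ⟨d, hd, rfl⟩
      have hb := gpBox_sph d hd
      obtain ⟨ha, hn⟩ := cT d hd
      refine ⟨(gp_mem_iff he d _ hb gpBox_ball4).1 ha, ?_⟩
      rw [← gp_mem_iff he d _ hb gpBox_ball3, hn]
      simp
  have hnodS := gp_nodup (j := j) he gpSph gpBox_sph cS
  have hnodN := gp_nodup (j := j) he (gpNbr gpBase) gpBox_nbr cN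
  have hdbl : ∀ w, w ∈ innerDoubled n k j ↔ ∃ d ∈ gpDbl, gpPhi n k j d = w := by
    intro w
    simp only [innerDoubled, gpDbl, gpPhi, Set.mem_insert_iff, Set.mem_singleton_iff,
      List.mem_cons, List.not_mem_nil, or_false, exists_eq_or_imp, exists_eq_left]
    push_cast
    simp only [neg_mul, one_mul, ← sub_eq_add_neg, eq_comm (a := w)]
  have hcount : ∀ t ∈ gpSph, {v : GPVertex n | (GP n k).Adj (Sum.inr j) v ∧
      (GP n k).dist v (gpPhi n k j t) = 3}.ncard
        = ((gpNbr gpBase).filter (gpDist3 e t)).length := by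
    intro t ht
    have hb := gpBox_sph t ht
    apply gp_ncard (j := j)
    · exact hnodN.sublist (List.filter_sublist.map _)
    · intro v
      rw [Set.mem_setOf_eq, hbase, gp_adj_iff n k h1 hk0]
      have hd3 : ∀ v ∈ gpNbr gpBase,
          ((GP n k).dist (gpPhi n k j v) (gpPhi n k j t) = 3 ↔ gpDist3 e t v = true) := by
        intro v hv
        rw [gp_dist_iff n k h1 hk0 j 2, ← gp_mem_iff he t _ hb (gpBox_nbr3 v hv),
          ← gp_mem_iff he t _ hb (gpBox_nbr2 v hv), gpDist3]
        simp
      constructor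
      · rintro ⟨⟨d, hd, rfl⟩, h3⟩
        exact ⟨d, List.mem_filter.2 ⟨hd, (hd3 d hd).1 h3⟩, rfl⟩
      · rintro ⟨d, hd, rfl⟩
        obtain ⟨hd, h3⟩ := List.mem_filter.1 hd
        exact ⟨⟨d, hd, rfl⟩, (hd3 d hd).2 h3⟩
  refine ⟨?_, ?_, ?_⟩
  · exact gp_ncard gpSph hnodS _ hdist
  · intro w hw
    obtain ⟨d, hd, rfl⟩ := (hdbl w).1 hw
    exact (hdist _).2 ⟨d, List.mem_append_left _ hd, rfl⟩
  · intro w hw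
    obtain ⟨t, ht, rfl⟩ := (hdist w).1 hw
    rw [hcount t ht]
    rcases List.mem_append.1 ht with h | h
    · exact Or.inl ⟨(hdbl _).2 ⟨t, h, rfl⟩, c2 t h⟩
    · refine Or.inr ⟨?_, c1 t h⟩
      rw [hdbl]
      rintro ⟨d, hd, hdt⟩
      rw [gpSph, List.map_append, List.nodup_append] at hnodS
      exact hnodS.2.2 _ (List.mem_map_of_mem hd) _ (List.mem_map_of_mem h) hdt
end
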